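/- arXiv:1402.6194 — 4 statements merged into one kernel-verified Lean document; each statement's English description precedes it below -/
import Mathlib

section
/- Let ε > 0 and n, m ∈ ℕ. The harmonic Moyal eigenfunction Ψ^ε_{nm} = W^ε[ψ_n^ε, ψ_m^ε] is a smooth function on ℝ² and satisfies, pointwise, the eigenvalue equation of the harmonic quantum Liouville operator: k ∂_x Ψ^ε_{nm}(x,k) − x ∂_k Ψ^ε_{nm}(x,k) = i (n − m) Ψ^ε_{nm}(x,k). -/
open MeasureTheory

/-- The ε-scaled cross-Wigner transform of `f` and `g`. -/
noncomputable def crossWigner (ε : ℝ) (f g : ℝ → ℂ) : ℝ × ℝ → ℂ := fun p =>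
  ((1 / (2 * Real.pi * ε) : ℝ) : ℂ) *
    ∫ ξ : ℝ, Complex.exp (-(Complex.I * p.2 * ξ) / ε) * f (p.1 + ξ / 2) *
      (starRingEnd ℂ) (g (p.1 - ξ / 2))

/-- The physicists' Hermite polynomials: `H_0 = 1`, `H_{n+1} = 2x H_n - H_n'`. -/
noncomputable def hermiteP : ℕ → Polynomial ℝ
  | 0 => 1
  | n + 1 => Polynomial.C 2 * Polynomial.X * hermiteP n - Polynomial.derivative (hermiteP n)

/-- Hermite function `ψ_n(x) = (2^n n! √π)^{-1/2} e^{-x²/2} H_n(x)`. -/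
noncomputable def hermiteFun (n : ℕ) : ℝ → ℂ := fun x =>
  (((2 ^ n * (n.factorial : ℝ) * Real.sqrt Real.pi) ^ (-(1 / 2 : ℝ)) *
    Real.exp (-x ^ 2 / 2) * (hermiteP n).eval x : ℝ) : ℂ)

/-- Semiclassically rescaled Hermite function `ψ_n^ε(x) = ε^{-1/4} ψ_n(x/√ε)`. -/
noncomputable def hermiteScaled (ε : ℝ) (n : ℕ) : ℝ → ℂ := fun x =>
  ((ε ^ (-(1 / 4 : ℝ)) : ℝ) : ℂ) * hermiteFun n (x / Real.sqrt ε)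

open Polynomial in
lemma hermiteP_deriv (n : ℕ) : derivative (hermiteP (n+1)) = C (2 * ((n:ℝ)+1)) * hermiteP n := by
  induction n with
  | zero => simp [hermiteP]
  | succ n ih =>
    rw [hermiteP, derivative_sub, ih]
    simp only [derivative_mul, derivative_C, derivative_X]
    rw [ih, hermiteP]
    simp only [map_mul, map_add, Nat.cast_add, Nat.cast_one, map_one]
    ring

open Polynomial in
lemma hermiteP_ode (n : ℕ) : derivative (derivative (hermiteP n)) =
    C 2 * X * derivative (hermiteP n) - C (2 * (n:ℝ)) * hermiteP n := by
  have h := hermiteP_deriv n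
  rw [hermiteP] at h
  simp only [derivative_mul, derivative_C, derivative_X, derivative_sub, map_mul, map_add, map_one] at h ⊢
  linear_combination -h

/-- Conjugated derivative. -/
noncomputable def Dop (b : ℝ) (p : Polynomial ℝ) : Polynomial ℝ :=
  Polynomial.derivative p - Polynomial.C b * Polynomial.X * p

open Polynomial in
lemma scaled_form (ε : ℝ) (hε : 0 < ε) (n : ℕ) : ∃ p : Polynomial ℝ,
    (∀ x, hermiteScaled ε n x = ((Real.exp (-(ε⁻¹ / 2) * x ^ 2) * p.eval x : ℝ) : ℂ)) ∧
    ∀ x, (Dop ε⁻¹ (Dop ε⁻¹ p)).eval x = ((ε⁻¹) ^ 2 * x ^ 2 - (2 * n + 1) * ε⁻¹) * p.eval x := by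
  set c : ℝ := ε ^ (-(1 / 4 : ℝ)) * (2 ^ n * (n.factorial : ℝ) * Real.sqrt Real.pi) ^ (-(1 / 2 : ℝ))
  set s : ℝ := (Real.sqrt ε)⁻¹ with hs
  have hs2 : ε⁻¹ = s ^ 2 := by rw [hs, inv_pow, Real.sq_sqrt hε.le]
  refine ⟨C c * (hermiteP n).comp (C s * X), ?_, ?_⟩
  · intro x
    have : (x / Real.sqrt ε) = s * x := by rw [hs]; ring
    simp only [hermiteScaled, hermiteFun, this, hs2]
    rw [← Complex.ofReal_mul]
    congr 1
    simp only [eval_mul, eval_C, eval_comp, eval_X, c]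
    rw [show -(s * x) ^ 2 / 2 = -(s ^ 2 / 2) * x ^ 2 by ring]
    ring
  · intro x
    have h := congrArg (eval (s * x)) (hermiteP_ode n)
    simp only [eval_mul, eval_C, eval_sub, eval_X] at h
    rw [hs2]
    simp only [Dop, derivative_mul, derivative_sub, derivative_C, derivative_X, derivative_comp,
      eval_mul, eval_C, eval_comp, eval_X, eval_sub, eval_add, derivative_zero, eval_zero, eval_one,
      derivative_add, derivative_one]
    linear_combination c * s ^ 2 * h

/-- Phase factor. -/
noncomputable def Kf (ε k ξ : ℝ) : ℂ := Complex.exp (-(Complex.I * k * ξ) / ε)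

lemma Kf_norm (ε k ξ : ℝ) : ‖Kf ε k ξ‖ = 1 := by
  rw [Kf, show -(Complex.I * k * ξ) / (ε:ℂ) = ((-(k * ξ) / ε : ℝ) : ℂ) * Complex.I by
    push_cast; ring]
  exact Complex.norm_exp_ofReal_mul_I _

lemma Kf_cont (ε k : ℝ) : Continuous (Kf ε k) := by
  unfold Kf; fun_prop

lemma Kf_deriv_k (ε k ξ : ℝ) :
    HasDerivAt (fun k => Kf ε k ξ) (Kf ε k ξ * (-(Complex.I * ξ) / ε)) k := by
  unfold Kf
  have h : HasDerivAt (fun k : ℝ => -(Complex.I * (k:ℂ) * ξ) / ε) (-(Complex.I * 1 * ξ) / ε) k :=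
    ((((Complex.ofRealCLM.hasDerivAt (x := k)).const_mul Complex.I).mul_const _).neg.div_const _)
  simpa using h.cexp

lemma Kf_deriv_xi (ε k ξ : ℝ) :
    HasDerivAt (fun ξ => Kf ε k ξ) (Kf ε k ξ * (-(Complex.I * k) / ε)) ξ := by
  unfold Kf
  have h : HasDerivAt (fun ξ : ℝ => -(Complex.I * (k:ℂ) * ξ) / ε) (-(Complex.I * k * 1) / ε) ξ :=
    (((Complex.ofRealCLM.hasDerivAt (x := ξ)).const_mul (Complex.I * k)).neg.div_const _)
  simpa using h.cexp

/-- Gaussian monomial. -/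
noncomputable def gm (ε : ℝ) (j : ℕ) (ξ : ℝ) : ℝ := ξ ^ j * Real.exp (-(ε⁻¹ / 4) * ξ ^ 2)

lemma gm_cont (ε : ℝ) (j : ℕ) : Continuous (gm ε j) := by
  unfold gm; fun_prop

lemma gm_int {ε : ℝ} (hε : 0 < ε) (j : ℕ) : Integrable (gm ε j) := by
  have := integrable_rpow_mul_exp_neg_mul_sq (b := ε⁻¹ / 4) (by positivity) (s := j)
    (by have : (0:ℝ) ≤ j := by positivity
        linarith)
  change Integrable (fun ξ : ℝ => ξ ^ j * Real.exp (-(ε⁻¹ / 4) * ξ ^ 2))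
  simpa [Real.rpow_natCast] using this

lemma gmK_int {ε : ℝ} (hε : 0 < ε) (j : ℕ) (k : ℝ) :
    Integrable (fun ξ => Kf ε k ξ * (gm ε j ξ : ℂ)) := by
  refine (gm_int hε j).norm.mono' ?_ ?_
  · exact ((Kf_cont ε k).mul (Complex.continuous_ofReal.comp (gm_cont ε j))).aestronglyMeasurable
  · filter_upwards with ξ
    simp [Kf_norm]

/-- Moments. -/
noncomputable def Mom (ε : ℝ) (j : ℕ) (k : ℝ) : ℂ := ∫ ξ : ℝ, Kf ε k ξ * (gm ε j ξ : ℂ)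

lemma Mom_deriv {ε : ℝ} (hε : 0 < ε) (j : ℕ) (k : ℝ) :
    HasDerivAt (Mom ε j) (-(Complex.I / ε) * Mom ε (j+1) k) k := by
  have h := hasDerivAt_integral_of_dominated_loc_of_deriv_le (μ := volume)
    (F := fun k ξ => Kf ε k ξ * (gm ε j ξ : ℂ))
    (F' := fun k ξ => -(Complex.I / ε) * (Kf ε k ξ * (gm ε (j+1) ξ : ℂ)))
    (x₀ := k) (s := Set.univ) (bound := fun ξ => ε⁻¹ * ‖gm ε (j+1) ξ‖) Filter.univ_mem
    (by filter_upwards with k; exact (gmK_int hε j k).aestronglyMeasurable)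
    (gmK_int hε j k) ((gmK_int hε (j+1) k).const_mul _).aestronglyMeasurable
    (by filter_upwards with ξ k _
        simp [Kf_norm, abs_of_pos hε])
    ((gm_int hε (j+1)).norm.const_mul _)
    (by filter_upwards with ξ k _
        refine ((Kf_deriv_k ε k ξ).mul_const (gm ε j ξ : ℂ)).congr_deriv ?_
        simp only [gm, pow_succ]; push_cast; ring)
  have h2 := h.2
  rw [integral_const_mul] at h2
  exact h2

lemma Mom_smooth {ε : ℝ} (hε : 0 < ε) (j : ℕ) : ContDiff ℝ (⊤ : ℕ∞) (Mom ε j) := by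
  rw [contDiff_infty]
  intro n
  induction n generalizing j with
  | zero =>
    refine contDiff_zero.2 ?_
    exact continuous_iff_continuousAt.2 fun k => (Mom_deriv hε j k).continuousAt
  | succ n ih =>
    push_cast
    rw [contDiff_succ_iff_deriv]
    refine ⟨fun k => (Mom_deriv hε j k).differentiableAt, by simp, ?_⟩
    rw [show deriv (Mom ε j) = fun k => -(Complex.I / ε) * Mom ε (j+1) k from
      funext fun k => (Mom_deriv hε j k).deriv]
    exact contDiff_const.mul (ih (j+1))

/-- Gaussian-polynomial class. -/
inductive Good (ε : ℝ) : (ℝ → ℝ → ℂ) → Prop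
  | mk (j : ℕ) (a : ℝ → ℂ) (ha : ContDiff ℝ (⊤ : ℕ∞) a) : Good ε (fun x ξ => a x * (gm ε j ξ : ℂ))
  | add (u v : ℝ → ℝ → ℂ) (hu : Good ε u) (hv : Good ε v) : Good ε (fun x ξ => u x ξ + v x ξ)

lemma Good.int {ε : ℝ} (hε : 0 < ε) {u : ℝ → ℝ → ℂ} (h : Good ε u) (x k : ℝ) :
    Integrable (fun ξ => Kf ε k ξ * u x ξ) := by
  induction h with
  | mk j a ha =>
    refine ((gmK_int hε j k).const_mul (a x)).congr (.of_forall fun ξ => ?_)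
    simp only; ring
  | add u v hu hv ihu ihv =>
    refine (ihu.add ihv).congr (.of_forall fun ξ => ?_)
    simp only [Pi.add_apply]; ring

lemma int_mk (ε : ℝ) (j : ℕ) (c : ℂ) (k : ℝ) :
    ∫ ξ : ℝ, Kf ε k ξ * (c * (gm ε j ξ : ℂ)) = c * Mom ε j k := by
  rw [Mom, ← integral_const_mul]
  congr 1; ext ξ; ring

lemma Good.int_add {ε : ℝ} (hε : 0 < ε) {u v : ℝ → ℝ → ℂ} (hu : Good ε u) (hv : Good ε v)
    (x k : ℝ) : ∫ ξ : ℝ, Kf ε k ξ * (u x ξ + v x ξ) =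
      (∫ ξ : ℝ, Kf ε k ξ * u x ξ) + ∫ ξ : ℝ, Kf ε k ξ * v x ξ := by
  rw [← integral_add (hu.int hε x k) (hv.int hε x k)]
  congr 1; ext ξ; ring

lemma Good.smooth {ε : ℝ} (hε : 0 < ε) {u : ℝ → ℝ → ℂ} (h : Good ε u) :
    ContDiff ℝ (⊤ : ℕ∞) (fun p : ℝ × ℝ => ∫ ξ : ℝ, Kf ε p.2 ξ * u p.1 ξ) := by
  induction h with
  | mk j a ha =>
    simp only [int_mk]
    exact (ha.comp contDiff_fst).mul ((Mom_smooth hε j).comp contDiff_snd)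
  | add u v hu hv ihu ihv =>
    simp only [hu.int_add hε hv]
    exact ihu.add ihv

lemma Good.deriv_k {ε : ℝ} (hε : 0 < ε) {u : ℝ → ℝ → ℂ} (h : Good ε u) (x k : ℝ) :
    Integrable (fun ξ : ℝ => Kf ε k ξ * (ξ * u x ξ)) ∧
    HasDerivAt (fun k => ∫ ξ : ℝ, Kf ε k ξ * u x ξ)
      (-(Complex.I / ε) * ∫ ξ : ℝ, Kf ε k ξ * (ξ * u x ξ)) k := by
  induction h with
  | mk j a ha =>
    have e : (fun ξ : ℝ => Kf ε k ξ * (ξ * (a x * (gm ε j ξ : ℂ)))) =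
        fun ξ : ℝ => Kf ε k ξ * (a x * (gm ε (j+1) ξ : ℂ)) := by
      ext ξ; simp only [gm, pow_succ]; push_cast; ring
    rw [e]
    refine ⟨(Good.mk (j+1) a ha).int hε x k, ?_⟩
    simp only [int_mk]
    refine ((Mom_deriv hε j k).const_mul (a x)).congr_deriv ?_
    ring
  | add u v hu hv ihu ihv =>
    have e : (fun ξ : ℝ => Kf ε k ξ * (ξ * (u x ξ + v x ξ))) =
        fun ξ : ℝ => Kf ε k ξ * (ξ * u x ξ) + Kf ε k ξ * (ξ * v x ξ) := by
      ext ξ; ring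
    rw [e]
    refine ⟨ihu.1.add ihv.1, ?_⟩
    rw [integral_add ihu.1 ihv.1, mul_add]
    simp only [hu.int_add hε hv]
    exact ihu.2.add ihv.2

lemma Good.deriv_x {ε : ℝ} (hε : 0 < ε) {u : ℝ → ℝ → ℂ} (h : Good ε u) :
    ∃ u' : ℝ → ℝ → ℂ, Good ε u' ∧ (∀ x ξ, HasDerivAt (fun x => u x ξ) (u' x ξ) x) ∧
    ∀ x k, HasDerivAt (fun x => ∫ ξ : ℝ, Kf ε k ξ * u x ξ) (∫ ξ : ℝ, Kf ε k ξ * u' x ξ) x := by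
  induction h with
  | mk j a ha =>
    have hd : ∀ x, HasDerivAt a (deriv a x) x := fun x =>
      (ha.differentiable (by simp) x).hasDerivAt
    refine ⟨fun x ξ => deriv a x * (gm ε j ξ : ℂ), Good.mk j _ (contDiff_infty_iff_deriv.1 ha).2,
      fun x ξ => (hd x).mul_const _, fun x k => ?_⟩
    simp only [int_mk]
    exact (hd x).mul_const _
  | add u v hu hv ihu ihv =>
    obtain ⟨u', gu, hu1, hu2⟩ := ihu
    obtain ⟨v', gv, hv1, hv2⟩ := ihv
    refine ⟨_, Good.add u' v' gu gv, fun x ξ => (hu1 x ξ).add (hv1 x ξ), fun x k => ?_⟩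
    simp only [hu.int_add hε hv, gu.int_add hε gv]
    exact (hu2 x k).add (hv2 x k)

lemma Good.mulx {ε : ℝ} {u : ℝ → ℝ → ℂ} (h : Good ε u) (b : ℝ → ℂ)
    (hb : ContDiff ℝ (⊤ : ℕ∞) b) : Good ε (fun x ξ => b x * u x ξ) := by
  induction h with
  | mk j a ha =>
    convert Good.mk (ε := ε) j (fun x => b x * a x) (hb.mul ha) using 3
    ring
  | add u v hu hv ihu ihv =>
    convert Good.add _ _ ihu ihv using 3
    ring

lemma Good.mulxi {ε : ℝ} {u : ℝ → ℝ → ℂ} (h : Good ε u) :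
    Good ε (fun x ξ => (ξ:ℂ) * u x ξ) := by
  induction h with
  | mk j a ha =>
    convert Good.mk (ε := ε) (j+1) a ha using 3
    simp only [gm, pow_succ]; push_cast; ring
  | add u v hu hv ihu ihv =>
    convert Good.add _ _ ihu ihv using 3
    ring

lemma Good.mulpoly {ε : ℝ} (t : ℝ) (p : Polynomial ℝ) {u : ℝ → ℝ → ℂ} (h : Good ε u) :
    Good ε (fun x ξ => ((p.eval (x + t * ξ) : ℝ) : ℂ) * u x ξ) := by
  induction p using Polynomial.induction_on with
  | C a => simpa using h.mulx (fun _ => (a:ℂ)) contDiff_const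
  | add p q hp hq =>
    convert Good.add _ _ hp hq using 3
    simp; ring
  | monomial n a ih =>
    convert Good.add _ _ (ih.mulx (fun x => (x:ℂ)) Complex.ofRealCLM.contDiff)
      (ih.mulxi.mulx (fun _ => (t:ℂ)) contDiff_const) using 3
    simp; ring

/-- Gaussian times polynomial. -/
noncomputable def gp (ε : ℝ) (p : Polynomial ℝ) (x : ℝ) : ℂ :=
  ((Real.exp (-(ε⁻¹ / 2) * x ^ 2) * p.eval x : ℝ) : ℂ)

lemma gp_deriv (ε : ℝ) (p : Polynomial ℝ) (x : ℝ) :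
    HasDerivAt (gp ε p) (gp ε (Dop ε⁻¹ p) x) x := by
  unfold gp
  have h1 : HasDerivAt (fun x : ℝ => Real.exp (-(ε⁻¹ / 2) * x ^ 2))
      (Real.exp (-(ε⁻¹ / 2) * x ^ 2) * (-(ε⁻¹ / 2) * (2 * x))) x := by
    have := ((hasDerivAt_pow 2 x).const_mul (-(ε⁻¹ / 2))).exp
    simpa using this
  refine (h1.mul (p.hasDerivAt x)).ofReal_comp.congr_deriv ?_
  congr 1
  simp only [Dop, Polynomial.eval_sub, Polynomial.eval_mul, Polynomial.eval_C, Polynomial.eval_X]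
  ring

/-- Product. -/
noncomputable def GG (ε : ℝ) (p q : Polynomial ℝ) (x ξ : ℝ) : ℂ :=
  gp ε p (x + ξ / 2) * gp ε q (x - ξ / 2)

lemma GG_good (ε : ℝ) (p q : Polynomial ℝ) : Good ε (GG ε p q) := by
  have h0 : Good ε (fun x ξ => ((Real.exp (-ε⁻¹ * x ^ 2) : ℝ) : ℂ) * (gm ε 0 ξ : ℂ)) :=
    Good.mk 0 _ (Complex.ofRealCLM.contDiff.comp
      (f := fun x : ℝ => Real.exp (-ε⁻¹ * x ^ 2)) (by fun_prop))
  convert (h0.mulpoly (-(1/2)) q).mulpoly (1/2) p using 3 with x ξ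
  have e : Real.exp (-(ε⁻¹ / 2) * (x + ξ/2) ^ 2) * Real.exp (-(ε⁻¹ / 2) * (x - ξ/2) ^ 2) =
    Real.exp (-ε⁻¹ * x ^ 2) * Real.exp (-(ε⁻¹ / 4) * ξ ^ 2) := by
    rw [← Real.exp_add, ← Real.exp_add]; congr 1; ring
  rw [GG, gp, gp, show x + 1/2 * ξ = x + ξ/2 by ring, show x + -(1/2) * ξ = x - ξ/2 by ring, gm]
  norm_cast
  linear_combination (p.eval (x + ξ/2) * q.eval (x - ξ/2)) * e

lemma GG_deriv_x (ε : ℝ) (p q : Polynomial ℝ) (x ξ : ℝ) :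
    HasDerivAt (fun x => GG ε p q x ξ)
      (GG ε (Dop ε⁻¹ p) q x ξ + GG ε p (Dop ε⁻¹ q) x ξ) x := by
  exact ((gp_deriv ε p (x + ξ/2)).comp_add_const x (ξ/2)).mul
    ((gp_deriv ε q (x - ξ/2)).comp_sub_const x (ξ/2))

lemma GG_deriv_xi (ε : ℝ) (p q : Polynomial ℝ) (x ξ : ℝ) :
    HasDerivAt (fun ξ => GG ε p q x ξ)
      ((GG ε (Dop ε⁻¹ p) q x ξ - GG ε p (Dop ε⁻¹ q) x ξ) / 2) ξ := by
  have h1 : HasDerivAt (fun ξ : ℝ => x + ξ/2) (1/2) ξ := ((hasDerivAt_id ξ).div_const 2).const_add x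
  have h2 : HasDerivAt (fun ξ : ℝ => x - ξ/2) (-(1/2)) ξ :=
    ((hasDerivAt_id ξ).div_const 2).const_sub x
  refine (((gp_deriv ε p (x + ξ/2)).scomp ξ h1).mul
    ((gp_deriv ε q (x - ξ/2)).scomp ξ h2)).congr_deriv ?_
  simp [GG]; ring

/-- The harmonic Moyal eigenfunction `Ψ^ε_{nm} = W^ε[ψ_n^ε, ψ_m^ε]` is smooth and satisfies the
quantum Liouville eigenvalue equation `k ∂_x Ψ - x ∂_k Ψ = i(n-m) Ψ`. -/
theorem harmonic_moyal_liouville_eigen (ε : ℝ) (hε : 0 < ε) (n m : ℕ) :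
    ContDiff ℝ (⊤ : ℕ∞) (crossWigner ε (hermiteScaled ε n) (hermiteScaled ε m)) ∧
    ∀ x k : ℝ,
      (k : ℂ) * deriv (fun x' => crossWigner ε (hermiteScaled ε n) (hermiteScaled ε m) (x', k)) x
        - (x : ℂ) * deriv (fun k' => crossWigner ε (hermiteScaled ε n) (hermiteScaled ε m) (x, k')) k
      = Complex.I * ((n : ℂ) - (m : ℂ)) *
          crossWigner ε (hermiteScaled ε n) (hermiteScaled ε m) (x, k) := by
  obtain ⟨p, hp, op⟩ := scaled_form ε hε n
  obtain ⟨q, hq, oq⟩ := scaled_form ε hε m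
  have hε' : (ε:ℂ) ≠ 0 := by exact_mod_cast hε.ne'
  set c : ℂ := ((1 / (2 * Real.pi * ε) : ℝ) : ℂ) with hc
  have hW : crossWigner ε (hermiteScaled ε n) (hermiteScaled ε m) =
      fun z : ℝ × ℝ => c * ∫ ξ : ℝ, Kf ε z.2 ξ * GG ε p q z.1 ξ := by
    funext z
    simp only [crossWigner, hp, hq, Complex.conj_ofReal, mul_assoc, Kf, GG, gp, hc]
  rw [hW]
  have hg := GG_good ε p q
  refine ⟨contDiff_const.mul (hg.smooth hε), fun x k => ?_⟩
  obtain ⟨u', gu, hu1, hu2⟩ := hg.deriv_x hε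
  have hu' : u' = fun x ξ => GG ε (Dop ε⁻¹ p) q x ξ + GG ε p (Dop ε⁻¹ q) x ξ := by
    funext x ξ
    exact (hu1 x ξ).unique (GG_deriv_x ε p q x ξ)
  have hk := hg.deriv_k hε x k
  rw [((hu2 x k).const_mul c).deriv, (hk.2.const_mul c).deriv]
  simp only
  -- integration by parts
  have hv : ∀ ξ, HasDerivAt (fun ξ => Kf ε k ξ * u' x ξ)
      (-(Complex.I * k / ε) * (Kf ε k ξ * u' x ξ) + 
        ((x / ε ^ 2) * (Kf ε k ξ * (ξ * GG ε p q x ξ)) -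
        ((n : ℂ) - m) / ε * (Kf ε k ξ * GG ε p q x ξ))) ξ := by
    intro ξ
    have h := (Kf_deriv_xi ε k ξ).mul ((GG_deriv_xi ε (Dop ε⁻¹ p) q x ξ).add
      (GG_deriv_xi ε p (Dop ε⁻¹ q) x ξ))
    rw [hu']
    refine h.congr_deriv ?_
    have e1 : GG ε (Dop ε⁻¹ (Dop ε⁻¹ p)) q x ξ =
        ((ε:ℂ)⁻¹ ^ 2 * (x + ξ/2) ^ 2 - (2 * n + 1) * (ε:ℂ)⁻¹) * GG ε p q x ξ := by
      simp only [GG, gp, op]; push_cast; ring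
    have e2 : GG ε p (Dop ε⁻¹ (Dop ε⁻¹ q)) x ξ =
        ((ε:ℂ)⁻¹ ^ 2 * (x - ξ/2) ^ 2 - (2 * m + 1) * (ε:ℂ)⁻¹) * GG ε p q x ξ := by
      simp only [GG, gp, oq]; push_cast; ring
    simp only [Pi.add_apply]
    rw [e1, e2]
    field_simp
    ring
  have i1 := (gu.int hε x k).const_mul (-(Complex.I * k / ε))
  have i2 := hk.1.const_mul ((x:ℂ) / ε ^ 2)
  have i3 := (hg.int hε x k).const_mul (((n : ℂ) - m) / ε)
  have i23 := i2.sub i3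
  have key := integral_eq_zero_of_hasDerivAt_of_integrable hv (i1.add i23) (gu.int hε x k)
  have key2 := (integral_add i1 i23).symm.trans key
  rw [show (∫ ξ : ℝ, ((fun ξ : ℝ => (x:ℂ) / ε ^ 2 * (Kf ε k ξ * (ξ * GG ε p q x ξ))) -
    fun ξ => ((n : ℂ) - m) / ε * (Kf ε k ξ * GG ε p q x ξ)) ξ) = _ from integral_sub i2 i3] at key2
  simp only [integral_const_mul] at key2
  generalize (∫ ξ : ℝ, Kf ε k ξ * u' x ξ) = A at *
  generalize (∫ ξ : ℝ, Kf ε k ξ * (ξ * GG ε p q x ξ)) = B at *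
  generalize (∫ ξ : ℝ, Kf ε k ξ * GG ε p q x ξ) = G at *
  field_simp at key2 ⊢
  linear_combination (c * Complex.I) * key2 + c * k * ε * A * Complex.I_sq
end

section
/- Let ε > 0 and n, m ∈ ℕ. The harmonic Moyal eigenfunction Ψ^ε_{nm} = W^ε[ψ_n^ε, ψ_m^ε] satisfies, pointwise, the eigenvalue equation of the harmonic cosine-bracket (Baker) operator: −(ε²/8)(∂_x² + ∂_k²) Ψ^ε_{nm}(x,k) + ((x² + k²)/2) Ψ^ε_{nm}(x,k) = (ε (n + m + 1)/2) Ψ^ε_{nm}(x,k), i.e. the eigenvalue is (E_n^ε + E_m^ε)/2 where E_n^ε = ε(n+1/2). -/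
open MeasureTheory

open Polynomial in
theorem hP_facts (n : ℕ) :
    derivative (derivative (hermiteP n)) =
      C 2 * X * derivative (hermiteP n) - C (2 * (n : ℝ)) * hermiteP n := by
  induction n with
  | zero => simp [hermiteP]
  | succ n ih =>
    have h1 : derivative (hermiteP (n + 1)) = C (2 * ((n : ℝ) + 1)) * hermiteP n := by
      rw [hermiteP]
      simp only [derivative_sub, derivative_mul, derivative_C, derivative_X, ih]
      simp only [map_mul, map_add, map_one]
      ring
    rw [h1, derivative_mul, derivative_C, hermiteP]
    push_cast
    simp only [map_mul, map_add, map_one]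
    ring

noncomputable def uG (p : Polynomial ℝ) (t : ℝ) : ℂ := ((p.eval t * Real.exp (-t ^ 2 / 2) : ℝ) : ℂ)

noncomputable def DG (p : Polynomial ℝ) : Polynomial ℝ := Polynomial.derivative p - Polynomial.X * p

theorem uG_bound (p : Polynomial ℝ) : ∃ C : ℝ, 0 ≤ C ∧ ∀ t, ‖uG p t‖ ≤ C * Real.exp (-t ^ 2 / 4) := by
  suffices h : ∃ C : ℝ, 0 ≤ C ∧ ∀ t : ℝ, |p.eval t| ≤ C * Real.exp (t ^ 2 / 4) by
    obtain ⟨C, hC, h⟩ := h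
    refine ⟨C, hC, fun t => ?_⟩
    rw [uG, Complex.norm_real, Real.norm_eq_abs, abs_mul, Real.abs_exp]
    have : Real.exp (-t ^ 2 / 4) = Real.exp (t ^ 2 / 4) * Real.exp (-t ^ 2 / 2) := by
      rw [← Real.exp_add]; ring_nf
    rw [this, ← mul_assoc]
    exact mul_le_mul_of_nonneg_right (h t) (Real.exp_pos _).le
  induction p using Polynomial.induction_on' with
  | add p q hp hq =>
    obtain ⟨C, hC, h⟩ := hp
    obtain ⟨C', hC', h'⟩ := hq
    refine ⟨C + C', by positivity, fun t => ?_⟩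
    rw [Polynomial.eval_add, add_mul]
    exact (abs_add_le _ _).trans (add_le_add (h t) (h' t))
  | monomial n a =>
    refine ⟨|a| * (1 + 4 ^ n * n.factorial), by positivity, fun t => ?_⟩
    rw [Polynomial.eval_monomial, abs_mul, mul_assoc]
    refine mul_le_mul_of_nonneg_left ?_ (abs_nonneg a)
    have h1 := Real.pow_div_factorial_le_exp (t ^ 2 / 4) (by positivity) n
    have h2 : (1 : ℝ) ≤ Real.exp (t ^ 2 / 4) := Real.one_le_exp (by positivity)
    have h3 : |t ^ n| ≤ 1 + (t ^ n) ^ 2 := by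
      nlinarith [sq_abs (t ^ n), sq_nonneg (|t ^ n| - 1)]
    have h4 : (t ^ n) ^ 2 = 4 ^ n * n.factorial * ((t ^ 2 / 4) ^ n / n.factorial) := by
      have : (n.factorial : ℝ) ≠ 0 := by positivity
      rw [div_pow]; field_simp; ring
    rw [h4] at h3
    refine h3.trans ?_
    rw [add_mul, one_mul]
    gcongr

theorem uG_deriv (p : Polynomial ℝ) (t : ℝ) : HasDerivAt (uG p) (uG (DG p) t) t := by
  unfold uG
  apply HasDerivAt.ofReal_comp
  have h1 := p.hasDerivAt t
  have h2 : HasDerivAt (fun t : ℝ => Real.exp (-t ^ 2 / 2)) (Real.exp (-t ^ 2 / 2) * (-t)) t := by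
    apply HasDerivAt.exp
    have := ((hasDerivAt_id t).pow 2).neg.div_const 2
    refine HasDerivAt.congr_deriv (f := fun t : ℝ => -t ^ 2 / 2) this ?_
    simp; ring
  refine (h1.mul h2).congr_deriv ?_
  simp [DG]; ring

theorem uG_cont (p : Polynomial ℝ) : Continuous (uG p) := by
  unfold uG; fun_prop

theorem uG_add (p q : Polynomial ℝ) (t : ℝ) : uG (p + q) t = uG p t + uG q t := by
  simp [uG]; ring

theorem uG_C (c : ℝ) (p : Polynomial ℝ) (t : ℝ) : uG (Polynomial.C c * p) t = c * uG p t := by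
  simp [uG]; ring

theorem uG_X (p : Polynomial ℝ) (t : ℝ) : uG (Polynomial.X * p) t = t * uG p t := by
  simp [uG]; ring

/-- integrand -/
noncomputable def jG (s x k : ℝ) (p q : Polynomial ℝ) (ξ : ℝ) : ℂ :=
  Complex.exp (-(Complex.I * k * ξ) / (s ^ 2 : ℝ)) * uG p ((x + ξ / 2) / s) * uG q ((x - ξ / 2) / s)

noncomputable def FG (s x k : ℝ) (p q : Polynomial ℝ) : ℂ := ∫ ξ, jG s x k p q ξ

theorem jG_cont (s x k : ℝ) (p q : Polynomial ℝ) : Continuous (jG s x k p q) := by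
  unfold jG
  have := uG_cont p
  have := uG_cont q
  fun_prop

theorem jG_bound (s : ℝ) (hs : 0 < s) (p q : Polynomial ℝ) : ∃ b : ℝ → ℝ, Integrable b ∧
    ∀ x k ξ, ‖jG s x k p q ξ‖ ≤ b ξ := by
  obtain ⟨C, hC, h⟩ := uG_bound p
  obtain ⟨C', hC', h'⟩ := uG_bound q
  refine ⟨fun ξ => C * C' * Real.exp (-(1 / (8 * s ^ 2)) * ξ ^ 2), ?_, fun x k ξ => ?_⟩
  · exact (integrable_exp_neg_mul_sq (by positivity)).const_mul _
  · have e1 : ‖Complex.exp (-(Complex.I * k * ξ) / (s ^ 2 : ℝ))‖ = 1 := by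
      have : -(Complex.I * k * ξ) / (s ^ 2 : ℝ) = ((-(k * ξ) / s ^ 2 : ℝ) : ℂ) * Complex.I := by
        push_cast; ring
      rw [this, Complex.norm_exp_ofReal_mul_I]
    rw [jG, norm_mul, norm_mul, e1, one_mul]
    refine (mul_le_mul (h _) (h' _) (norm_nonneg _) (by positivity)).trans ?_
    rw [mul_mul_mul_comm, ← Real.exp_add]
    refine mul_le_mul_of_nonneg_left (Real.exp_le_exp.2 ?_) (by positivity)
    have : -((x + ξ / 2) / s) ^ 2 / 4 + -((x - ξ / 2) / s) ^ 2 / 4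
      = -(1 / (8 * s ^ 2)) * ξ ^ 2 - (x / s) ^ 2 / 2 := by field_simp; ring
    rw [this]
    nlinarith [sq_nonneg (x / s)]

theorem jG_int (s : ℝ) (hs : 0 < s) (x k : ℝ) (p q : Polynomial ℝ) : Integrable (jG s x k p q) := by
  obtain ⟨b, hb, h⟩ := jG_bound s hs p q
  exact hb.mono' (jG_cont s x k p q).aestronglyMeasurable (Filter.Eventually.of_forall (h x k))


theorem FG_add_left (s : ℝ) (hs : 0 < s) (x k : ℝ) (p p' q : Polynomial ℝ) : FG s x k (p + p') q = FG s x k p q + FG s x k p' q := by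
  unfold FG
  rw [← integral_add (jG_int s hs x k _ _) (jG_int s hs x k _ _)]
  congr 1; ext ξ; simp only [jG, uG_add]; ring

theorem FG_add_right (s : ℝ) (hs : 0 < s) (x k : ℝ) (p q q' : Polynomial ℝ) : FG s x k p (q + q') = FG s x k p q + FG s x k p q' := by
  unfold FG
  rw [← integral_add (jG_int s hs x k _ _) (jG_int s hs x k _ _)]
  congr 1; ext ξ; simp only [jG, uG_add]; ring

theorem FG_C_left (s x k : ℝ) (p q : Polynomial ℝ) (c : ℝ) : FG s x k (Polynomial.C c * p) q = c * FG s x k p q := by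
  unfold FG
  rw [← integral_const_mul]
  congr 1; ext ξ; simp only [jG, uG_C]; ring

theorem FG_C_right (s x k : ℝ) (p q : Polynomial ℝ) (c : ℝ) : FG s x k p (Polynomial.C c * q) = c * FG s x k p q := by
  unfold FG
  rw [← integral_const_mul]
  congr 1; ext ξ; simp only [jG, uG_C]; ring

theorem FG_x (s : ℝ) (hs : 0 < s) (x k : ℝ) (p q : Polynomial ℝ) : (x : ℂ) * FG s x k p q =
    s / 2 * (FG s x k (Polynomial.X * p) q + FG s x k p (Polynomial.X * q)) := by
  have hs' : (s : ℂ) ≠ 0 := by exact_mod_cast hs.ne'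
  unfold FG
  rw [← integral_add (jG_int s hs x k _ _) (jG_int s hs x k _ _), ← integral_const_mul,
    ← integral_const_mul]
  congr 1; ext ξ; simp only [jG, uG_X]; push_cast; field_simp; ring

theorem FG_ibp (s : ℝ) (hs : 0 < s) (x k : ℝ) (p q : Polynomial ℝ) : (k : ℂ) * FG s x k p q =
    -(Complex.I * s / 2) * (FG s x k (DG p) q - FG s x k p (DG q)) := by
  have hs' : (s : ℂ) ≠ 0 := by exact_mod_cast hs.ne'
  have hd : ∀ ξ, HasDerivAt (jG s x k p q) (-(Complex.I * k) / (s ^ 2 : ℝ) * jG s x k p q ξ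
      + 1 / (2 * s) * (jG s x k (DG p) q ξ - jG s x k p (DG q) ξ)) ξ := by
    intro ξ
    have h0 : HasDerivAt (fun ξ : ℝ => Complex.exp (-(Complex.I * k * ξ) / (s ^ 2 : ℝ)))
        (Complex.exp (-(Complex.I * k * ξ) / (s ^ 2 : ℝ)) * (-(Complex.I * k * 1) / (s ^ 2 : ℝ))) ξ := by
      apply HasDerivAt.cexp
      exact ((Complex.ofRealCLM.hasDerivAt (x := ξ)).const_mul (Complex.I * k)).neg.div_const _
    have ha : HasDerivAt (fun ξ : ℝ => (x + ξ / 2) / s) (1 / 2 / s) ξ :=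
      (((hasDerivAt_id ξ).div_const 2).const_add x).div_const s
    have hb : HasDerivAt (fun ξ : ℝ => (x - ξ / 2) / s) (-(1 / 2) / s) ξ :=
      (((hasDerivAt_id ξ).div_const 2).const_sub x).div_const s
    have h1 := (uG_deriv p ((x + ξ / 2) / s)).scomp ξ ha
    have h2 := (uG_deriv q ((x - ξ / 2) / s)).scomp ξ hb
    have := (h0.mul h1).mul h2
    refine this.congr_deriv ?_
    simp only [jG, Complex.real_smul, Function.comp, Pi.mul_apply]
    push_cast
    field_simp
    ring
  have i1 := jG_int s hs x k p q
  have i2 := jG_int s hs x k (DG p) q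
  have i3 := jG_int s hs x k p (DG q)
  have i4 : Integrable (fun ξ => jG s x k (DG p) q ξ - jG s x k p (DG q) ξ) := i2.sub i3
  have h := integral_eq_zero_of_hasDerivAt_of_integrable hd
    ((i1.const_mul _).add (i4.const_mul _)) i1
  rw [integral_add (i1.const_mul _) (i4.const_mul _), integral_const_mul,
    integral_const_mul, integral_sub i2 i3] at h
  change -(Complex.I * k) / (s ^ 2 : ℝ) * FG s x k p q
      + 1 / (2 * s) * (FG s x k (DG p) q - FG s x k p (DG q)) = 0 at h
  push_cast at h
  field_simp at h
  linear_combination (Complex.I / 2) * h + (FG s x k p q * k ) * Complex.I_sq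

theorem FG_dx (s : ℝ) (hs : 0 < s) (x k : ℝ) (p q : Polynomial ℝ) : HasDerivAt (fun x => FG s x k p q)
    (1 / s * (FG s x k (DG p) q + FG s x k p (DG q))) x := by
  have hs' : (s : ℂ) ≠ 0 := by exact_mod_cast hs.ne'
  obtain ⟨b, hb, hB⟩ := jG_bound s hs (DG p) q
  obtain ⟨b', hb', hB'⟩ := jG_bound s hs p (DG q)
  have h := (hasDerivAt_integral_of_dominated_loc_of_deriv_le (μ := volume) (x₀ := x)
    (s := Set.univ) (F := fun x ξ => jG s x k p q ξ)
    (F' := fun x ξ => 1 / s * (jG s x k (DG p) q ξ + jG s x k p (DG q) ξ))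
    (bound := fun ξ => ‖(1 / s : ℂ)‖ * (b ξ + b' ξ)) Filter.univ_mem
    (Filter.Eventually.of_forall fun x => (jG_cont s x k p q).aestronglyMeasurable)
    (jG_int s hs x k p q)
    (((jG_int s hs x k (DG p) q).add (jG_int s hs x k p (DG q))).const_mul _).aestronglyMeasurable
    (Filter.Eventually.of_forall fun ξ x _ => ?_) ((hb.add hb').const_mul _)
    (Filter.Eventually.of_forall fun ξ x _ => ?_)).2
  · rw [integral_const_mul, integral_add (jG_int s hs x k _ _) (jG_int s hs x k _ _)] at h
    exact h
  · rw [norm_mul]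
    exact mul_le_mul_of_nonneg_left ((norm_add_le _ _).trans (add_le_add (hB _ _ _) (hB' _ _ _)))
      (norm_nonneg _)
  · have ha : HasDerivAt (fun x : ℝ => (x + ξ / 2) / s) (1 / s) x :=
      ((hasDerivAt_id x).add_const _).div_const s
    have hb : HasDerivAt (fun x : ℝ => (x - ξ / 2) / s) (1 / s) x :=
      ((hasDerivAt_id x).sub_const _).div_const s
    have h1 := (uG_deriv p ((x + ξ / 2) / s)).scomp x ha
    have h2 := (uG_deriv q ((x - ξ / 2) / s)).scomp x hb
    have := (h1.const_mul (Complex.exp (-(Complex.I * k * ξ) / (s ^ 2 : ℝ)))).mul h2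
    refine this.congr_deriv ?_
    simp only [jG, Complex.real_smul, Function.comp, Pi.mul_apply]
    push_cast
    field_simp
    try ring

theorem FG_dk (s : ℝ) (hs : 0 < s) (x k : ℝ) (p q : Polynomial ℝ) : HasDerivAt (fun k => FG s x k p q)
    (-Complex.I / s * (FG s x k (Polynomial.X * p) q - FG s x k p (Polynomial.X * q))) k := by
  have hs' : (s : ℂ) ≠ 0 := by exact_mod_cast hs.ne'
  obtain ⟨b, hb, hB⟩ := jG_bound s hs (Polynomial.X * p) q
  obtain ⟨b', hb', hB'⟩ := jG_bound s hs p (Polynomial.X * q)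
  have h := (hasDerivAt_integral_of_dominated_loc_of_deriv_le (μ := volume) (x₀ := k)
    (s := Set.univ) (F := fun k ξ => jG s x k p q ξ)
    (F' := fun k ξ => -Complex.I / s * (jG s x k (Polynomial.X * p) q ξ - jG s x k p (Polynomial.X * q) ξ))
    (bound := fun ξ => ‖(-Complex.I / s : ℂ)‖ * (b ξ + b' ξ)) Filter.univ_mem
    (Filter.Eventually.of_forall fun k => (jG_cont s x k p q).aestronglyMeasurable)
    (jG_int s hs x k p q)
    (((jG_int s hs x k (Polynomial.X * p) q).sub (jG_int s hs x k p (Polynomial.X * q))).const_mul _).aestronglyMeasurable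
    (Filter.Eventually.of_forall fun ξ k _ => ?_) ((hb.add hb').const_mul _)
    (Filter.Eventually.of_forall fun ξ k _ => ?_)).2
  · rw [integral_const_mul, integral_sub (jG_int s hs x k _ _) (jG_int s hs x k _ _)] at h
    exact h
  · rw [norm_mul]
    exact mul_le_mul_of_nonneg_left ((norm_sub_le _ _).trans (add_le_add (hB _ _ _) (hB' _ _ _)))
      (norm_nonneg _)
  · have h0 : HasDerivAt (fun k : ℝ => Complex.exp (-(Complex.I * k * ξ) / (s ^ 2 : ℝ)))
        (Complex.exp (-(Complex.I * k * ξ) / (s ^ 2 : ℝ)) * (-(Complex.I * 1 * ξ) / (s ^ 2 : ℝ))) k := by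
      apply HasDerivAt.cexp
      exact (((Complex.ofRealCLM.hasDerivAt (x := k)).const_mul Complex.I).mul_const _).neg.div_const _
    have := (h0.mul_const (uG p ((x + ξ / 2) / s))).mul_const (uG q ((x - ξ / 2) / s))
    refine this.congr_deriv ?_
    simp only [jG, uG_X]
    push_cast
    field_simp
    ring

theorem FG_dxx (s : ℝ) (hs : 0 < s) (x k : ℝ) (p q : Polynomial ℝ) : iteratedDeriv 2 (fun x => FG s x k p q) x =
    1 / s ^ 2 * (FG s x k (DG (DG p)) q + 2 * FG s x k (DG p) (DG q) + FG s x k p (DG (DG q))) := by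
  rw [iteratedDeriv_succ, iteratedDeriv_one]
  have : deriv (fun x => FG s x k p q) =
      fun x => (1 / s * (FG s x k (DG p) q + FG s x k p (DG q)) : ℂ) :=
    funext fun x => (FG_dx s hs x k p q).deriv
  rw [this, (((FG_dx s hs x k (DG p) q).fun_add (FG_dx s hs x k p (DG q))).const_mul _).deriv]
  ring

theorem FG_dkk (s : ℝ) (hs : 0 < s) (x k : ℝ) (p q : Polynomial ℝ) : iteratedDeriv 2 (fun k => FG s x k p q) k =
    -1 / s ^ 2 * (FG s x k (Polynomial.X * (Polynomial.X * p)) q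
      - 2 * FG s x k (Polynomial.X * p) (Polynomial.X * q)
      + FG s x k p (Polynomial.X * (Polynomial.X * q))) := by
  rw [iteratedDeriv_succ, iteratedDeriv_one]
  have : deriv (fun k => FG s x k p q) =
      fun k => (-Complex.I / s * (FG s x k (Polynomial.X * p) q - FG s x k p (Polynomial.X * q)) : ℂ) :=
    funext fun k => (FG_dk s hs x k p q).deriv
  rw [this, (((FG_dk s hs x k (Polynomial.X * p) q).fun_sub
    (FG_dk s hs x k p (Polynomial.X * q))).const_mul _).deriv]
  ring_nf
  simp only [Complex.I_sq]
  ring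


theorem DG_hermite (n : ℕ) : DG (DG (hermiteP n)) =
    Polynomial.X * (Polynomial.X * hermiteP n) + Polynomial.C (-(2 * (n : ℝ) + 1)) * hermiteP n := by
  simp only [DG, Polynomial.derivative_sub, Polynomial.derivative_mul, Polynomial.derivative_X,
    hP_facts]
  simp only [map_mul, map_add, map_one, map_neg]
  have : (Polynomial.C 2 : Polynomial ℝ) = 2 := rfl
  rw [this]
  ring

theorem FG_eigen (s : ℝ) (hs : 0 < s) (n m : ℕ) (x k : ℝ) :
    -((s : ℂ) ^ 4 / 8) * (iteratedDeriv 2 (fun x => FG s x k (hermiteP n) (hermiteP m)) x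
      + iteratedDeriv 2 (fun k => FG s x k (hermiteP n) (hermiteP m)) k)
    + (((x : ℂ) ^ 2 + (k : ℂ) ^ 2) / 2) * FG s x k (hermiteP n) (hermiteP m)
    = ((s : ℂ) ^ 2 * (n + m + 1) / 2) * FG s x k (hermiteP n) (hermiteP m) := by
  have hs' : (s : ℂ) ≠ 0 := by exact_mod_cast hs.ne'
  rw [FG_dxx s hs, FG_dkk s hs]
  set p := hermiteP n with hp
  set q := hermiteP m with hq
  have hx := FG_x s hs x k p q
  have hx1 := FG_x s hs x k (Polynomial.X * p) q
  have hx2 := FG_x s hs x k p (Polynomial.X * q)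
  have hk := FG_ibp s hs x k p q
  have hk1 := FG_ibp s hs x k (DG p) q
  have hk2 := FG_ibp s hs x k p (DG q)
  have e1 : FG s x k (DG (DG p)) q = FG s x k (Polynomial.X * (Polynomial.X * p)) q
      - (2 * n + 1) * FG s x k p q := by
    rw [hp, DG_hermite, FG_add_left s hs, FG_C_left]; push_cast; ring
  have e2 : FG s x k p (DG (DG q)) = FG s x k p (Polynomial.X * (Polynomial.X * q))
      - (2 * m + 1) * FG s x k p q := by
    rw [hq, DG_hermite, FG_add_right s hs, FG_C_right]; push_cast; ring
  have X2 : (x : ℂ) ^ 2 * FG s x k p q = s ^ 2 / 4 * (FG s x k (Polynomial.X * (Polynomial.X * p)) q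
      + 2 * FG s x k (Polynomial.X * p) (Polynomial.X * q)
      + FG s x k p (Polynomial.X * (Polynomial.X * q))) := by
    linear_combination x * hx + s / 2 * hx1 + s / 2 * hx2
  have K2 : (k : ℂ) ^ 2 * FG s x k p q = -(s ^ 2 / 4) * (FG s x k (DG (DG p)) q
      - 2 * FG s x k (DG p) (DG q) + FG s x k p (DG (DG q))) := by
    linear_combination k * hk - (Complex.I * s / 2) * hk1 + (Complex.I * s / 2) * hk2
      + (s ^ 2 / 4) * (FG s x k (DG (DG p)) q
      - 2 * FG s x k (DG p) (DG q) + FG s x k p (DG (DG q))) * Complex.I_sq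
  have : (((x : ℂ) ^ 2 + (k : ℂ) ^ 2) / 2) * FG s x k p q
    = (x : ℂ) ^ 2 * FG s x k p q / 2 + (k : ℂ) ^ 2 * FG s x k p q / 2 := by ring
  rw [this, X2, K2, e1, e2]
  field_simp
  ring

theorem cW_eq (ε : ℝ) (hε : 0 < ε) (n m : ℕ) : ∃ K : ℂ, ∀ x k : ℝ,
    crossWigner ε (hermiteScaled ε n) (hermiteScaled ε m) (x, k) =
      K * FG (Real.sqrt ε) x k (hermiteP n) (hermiteP m) := by
  refine ⟨((1 / (2 * Real.pi * ε) : ℝ) : ℂ) * (((ε ^ (-(1 / 4 : ℝ)) : ℝ) : ℂ) ^ 2 *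
    (((2 ^ n * (n.factorial : ℝ) * Real.sqrt Real.pi) ^ (-(1 / 2 : ℝ)) : ℝ) : ℂ) *
    (((2 ^ m * (m.factorial : ℝ) * Real.sqrt Real.pi) ^ (-(1 / 2 : ℝ)) : ℝ) : ℂ)), fun x k => ?_⟩
  rw [crossWigner, FG, mul_assoc ((1 / (2 * Real.pi * ε) : ℝ) : ℂ)]
  congr 1
  rw [← integral_const_mul]
  refine integral_congr_ae (Filter.Eventually.of_forall fun ξ => ?_)
  simp only [jG, hermiteScaled, hermiteFun, uG, map_mul, Complex.conj_ofReal, Real.sq_sqrt hε.le]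
  push_cast
  ring

/-- The harmonic Moyal eigenfunction `Ψ^ε_{nm} = W^ε[ψ_n^ε, ψ_m^ε]` satisfies the cosine-bracket
(Baker) eigenvalue equation
`-(ε²/8)(∂_x² + ∂_k²)Ψ + ((x²+k²)/2)Ψ = (ε(n+m+1)/2)Ψ = ((E_n^ε+E_m^ε)/2)Ψ`. -/
theorem harmonic_moyal_baker_eigen (ε : ℝ) (hε : 0 < ε) (n m : ℕ) :
    ∀ x k : ℝ,
      -((ε : ℂ) ^ 2 / 8) *
        (iteratedDeriv 2 (fun x' => crossWigner ε (hermiteScaled ε n) (hermiteScaled ε m) (x', k)) x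
          + iteratedDeriv 2 (fun k' => crossWigner ε (hermiteScaled ε n) (hermiteScaled ε m) (x, k')) k)
      + (((x : ℂ) ^ 2 + (k : ℂ) ^ 2) / 2) *
          crossWigner ε (hermiteScaled ε n) (hermiteScaled ε m) (x, k)
      = ((ε : ℂ) * ((n : ℂ) + (m : ℂ) + 1) / 2) *
          crossWigner ε (hermiteScaled ε n) (hermiteScaled ε m) (x, k) := by
  intro x k
  obtain ⟨K, hK⟩ := cW_eq ε hε n m
  have hs : 0 < Real.sqrt ε := Real.sqrt_pos.2 hε
  have h := FG_eigen (Real.sqrt ε) hs n m x k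
  have h2 : ((Real.sqrt ε : ℝ) : ℂ) ^ 2 = ε := by exact_mod_cast Real.sq_sqrt hε.le
  have h4 : ((Real.sqrt ε : ℝ) : ℂ) ^ 4 = (ε : ℂ) ^ 2 := by rw [← h2]; ring
  rw [h2, h4] at h
  simp only [hK]
  rw [iteratedDeriv_const_mul_field, iteratedDeriv_const_mul_field]
  linear_combination K * h
end

section
/- Let V: ℝ → ℝ be smooth with V(0) = V'(0) = 0 and V''(0) = 1, let g_h^t(q,p) = (q cos t + p sin t, p cos t − q sin t) be the harmonic flow, and for ν ≥ 1 let B_ν be the differential operator B_ν := −V^{(ν+2)}(0) Σ_{j=0}^{⌊(ν−1)/2⌋+1} (i/2)^{2j} (1/((2j+1)! (ν+1−2j)!)) ξ^{ν+1−2j} ∂_η^{2j+1}. Fix j ≥ 1 and ν_1, …, ν_j ∈ ℕ with ν_i ≥ 1, let f ∈ 𝒮(ℝ²), and for arbitrary real times s_1, …, s_j define recursively G_j := B_{ν_j}[f ∘ g_h^{−s_j}] and G_i := B_{ν_i}[G_{i+1} ∘ g_h^{−s_i}] for i = j−1, …, 1. Then there is a constant C_{ν_1,…,ν_j} depending only on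 f, V and ν_1, …, ν_j (and not on s_1, …, s_j) such that ‖G_1‖_{L²(ℝ²)} ≤ C_{ν_1,…,ν_j}. -/
open MeasureTheory

/-- The harmonic-oscillator Hamiltonian flow. -/
noncomputable def gh (t : ℝ) : ℝ × ℝ → ℝ × ℝ := fun z =>
  (z.1 * Real.cos t + z.2 * Real.sin t, z.2 * Real.cos t - z.1 * Real.sin t)

/-- The correction operator
`B_ν = -V^{(ν+2)}(0) Σ_{j=0}^{⌊(ν-1)/2⌋+1} (i/2)^{2j} (1/((2j+1)!(ν+1-2j)!)) ξ^{ν+1-2j} ∂_η^{2j+1}`. -/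
noncomputable def Bop (V : ℝ → ℝ) (ν : ℕ) (f : ℝ × ℝ → ℂ) : ℝ × ℝ → ℂ := fun p =>
  -((iteratedDeriv (ν + 2) V 0 : ℝ) : ℂ) *
    ∑ j ∈ Finset.range ((ν - 1) / 2 + 2),
      (Complex.I / 2) ^ (2 * j) *
        ((1 : ℂ) / ((((2 * j + 1).factorial * (ν + 1 - 2 * j).factorial : ℕ) : ℝ) : ℂ)) *
        (p.1 : ℂ) ^ (ν + 1 - 2 * j) *
        iteratedDeriv (2 * j + 1) (fun η => f (p.1, η)) p.2

/-- Iterated application: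
`iterB V [(ν₁,s₁),...,(ν_j,s_j)] f = B_{ν₁}[B_{ν₂}[⋯ B_{ν_j}[f ∘ g_h^{-s_j}] ⋯ ∘ g_h^{-s₂}] ∘ g_h^{-s₁}]`. -/
noncomputable def iterB (V : ℝ → ℝ) : List (ℕ × ℝ) → (ℝ × ℝ → ℂ) → (ℝ × ℝ → ℂ)
  | [], f => f
  | (ν, s) :: rest, f => Bop V ν (fun p => iterB V rest f (gh (-s) p))

open SchwartzMap in
/-- The vertical derivative on Schwartz space. -/
noncomputable def dEta : SchwartzMap (ℝ × ℝ) ℂ →L[ℂ] SchwartzMap (ℝ × ℝ) ℂ :=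
  LineDeriv.lineDerivOpCLM ℂ (SchwartzMap (ℝ × ℝ) ℂ) ((0 : ℝ), (1 : ℝ))

lemma deriv_slice (g : SchwartzMap (ℝ × ℝ) ℂ) (a : ℝ) :
    deriv (fun η => g (a, η)) = fun η => dEta g (a, η) := by
  funext η
  have h1 : HasFDerivAt g (fderiv ℝ g (a, η)) (a, η) := g.differentiableAt.hasFDerivAt
  have h2 : HasDerivAt (fun η : ℝ => (a, η)) ((0 : ℝ), (1 : ℝ)) η :=
    (hasDerivAt_const η a).prodMk (hasDerivAt_id η)
  have h3 := h1.comp_hasDerivAt η h2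
  have h4 : deriv (fun η => g (a, η)) η = fderiv ℝ g (a, η) (0, 1) := h3.deriv
  rw [h4]
  simp [dEta, SchwartzMap.lineDerivOp_apply_eq_fderiv]

lemma iteratedDeriv_slice (n : ℕ) (g : SchwartzMap (ℝ × ℝ) ℂ) (a : ℝ) :
    iteratedDeriv n (fun η => g (a, η)) = fun η => (dEta ^ n) g (a, η) := by
  induction n generalizing g with
  | zero => simp
  | succ n ih =>
    rw [iteratedDeriv_succ', deriv_slice, ih, pow_succ]
    rfl

/-- `Bop` as a continuous linear map on Schwartz space. -/
noncomputable def BopCLM (V : ℝ → ℝ) (ν : ℕ) :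
    SchwartzMap (ℝ × ℝ) ℂ →L[ℂ] SchwartzMap (ℝ × ℝ) ℂ :=
  (-((iteratedDeriv (ν + 2) V 0 : ℝ) : ℂ)) •
    ∑ j ∈ Finset.range ((ν - 1) / 2 + 2),
      ((Complex.I / 2) ^ (2 * j) *
        ((1 : ℂ) / ((((2 * j + 1).factorial * (ν + 1 - 2 * j).factorial : ℕ) : ℝ) : ℂ))) •
      ((SchwartzMap.smulLeftCLM ℂ (fun p : ℝ × ℝ => (p.1 : ℂ) ^ (ν + 1 - 2 * j))) ∘L
        (dEta ^ (2 * j + 1)))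

lemma tg (k : ℕ) : Function.HasTemperateGrowth (fun p : ℝ × ℝ => (p.1 : ℂ) ^ k) := by
  have h : Function.HasTemperateGrowth (fun p : ℝ × ℝ => (p.1 : ℂ)) :=
    (Complex.ofRealCLM ∘L ContinuousLinearMap.fst ℝ ℝ ℝ).hasTemperateGrowth
  exact h.pow k

lemma BopCLM_apply (V : ℝ → ℝ) (ν : ℕ) (g : SchwartzMap (ℝ × ℝ) ℂ) :
    ⇑(BopCLM V ν g) = Bop V ν g := by
  funext p
  simp only [BopCLM, Bop, _root_.smul_apply, _root_.sum_apply,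
    ContinuousLinearMap.comp_apply]
  rw [smul_eq_mul]
  congr 1
  refine Finset.sum_congr rfl fun j _ => ?_
  rw [SchwartzMap.smulLeftCLM_apply_apply (tg _), iteratedDeriv_slice, smul_eq_mul, smul_eq_mul]
  ring

/-- The flow as a continuous linear map. -/
noncomputable def ghL (t : ℝ) : (ℝ × ℝ) →L[ℝ] (ℝ × ℝ) :=
  (Real.cos t • ContinuousLinearMap.fst ℝ ℝ ℝ + Real.sin t • ContinuousLinearMap.snd ℝ ℝ ℝ).prod
  (Real.cos t • ContinuousLinearMap.snd ℝ ℝ ℝ - Real.sin t • ContinuousLinearMap.fst ℝ ℝ ℝ)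

lemma ghL_apply (t : ℝ) (z : ℝ × ℝ) : ghL t z = gh t z := by
  simp [ghL, gh, mul_comm]

lemma ghL_inv (t : ℝ) (z : ℝ × ℝ) : ghL (-t) (ghL t z) = z := by
  have := Real.sin_sq_add_cos_sq t
  simp only [ghL_apply, gh, Real.cos_neg, Real.sin_neg]
  ext
  · simp only; linear_combination z.1 * this
  · simp only; linear_combination z.2 * this

/-- The flow as a continuous linear equivalence. -/
noncomputable def ghE (t : ℝ) : (ℝ × ℝ) ≃L[ℝ] (ℝ × ℝ) :=
  ContinuousLinearEquiv.equivOfInverse (ghL t) (ghL (-t)) (ghL_inv t)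
    (fun z => by simpa using ghL_inv (-t) z)

lemma ghL_norm_apply (t : ℝ) (z : ℝ × ℝ) : ‖ghL t z‖ ≤ 2 * ‖z‖ := by
  have hc := Real.abs_cos_le_one t
  have hs := Real.abs_sin_le_one t
  have h1 : |z.1| ≤ ‖z‖ := norm_fst_le z
  have h2 : |z.2| ≤ ‖z‖ := norm_snd_le z
  have key : ∀ a b : ℝ, |a| ≤ 1 → |b| ≤ ‖z‖ → |b * a| ≤ ‖z‖ := by
    intro a b ha hb
    rw [abs_mul]
    calc |b| * |a| ≤ ‖z‖ * 1 := mul_le_mul hb ha (abs_nonneg _) (norm_nonneg _)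
      _ = ‖z‖ := mul_one _
  rw [ghL_apply, Prod.norm_def, max_le_iff]
  simp only [gh, Real.norm_eq_abs]
  constructor
  · refine (abs_add_le _ _).trans ?_
    linarith [key _ _ hc h1, key _ _ hs h2]
  · refine (abs_sub _ _).trans ?_
    linarith [key _ _ hc h2, key _ _ hs h1]

lemma ghL_norm (t : ℝ) : ‖ghL t‖ ≤ 2 :=
  ContinuousLinearMap.opNorm_le_bound _ (by norm_num) (ghL_norm_apply t)

/-- Composition with the flow on Schwartz space. -/
noncomputable def rot (t : ℝ) (g : SchwartzMap (ℝ × ℝ) ℂ) : SchwartzMap (ℝ × ℝ) ℂ :=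
  SchwartzMap.compCLMOfContinuousLinearEquiv ℂ (ghE t) g

lemma rot_coe (t : ℝ) (g : SchwartzMap (ℝ × ℝ) ℂ) : ⇑(rot t g) = ⇑g ∘ ⇑(ghL t) := rfl

lemma rot_seminorm (t : ℝ) (g : SchwartzMap (ℝ × ℝ) ℂ) (k n : ℕ) :
    SchwartzMap.seminorm ℂ k n (rot t g) ≤ 2 ^ k * 2 ^ n * SchwartzMap.seminorm ℂ k n g := by
  refine SchwartzMap.seminorm_le_bound ℂ k n _ (by positivity) fun x => ?_
  rw [rot_coe, (ghL t).iteratedFDeriv_comp_right (g.smooth n) x le_rfl]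
  have h1 : ‖x‖ ≤ 2 * ‖ghL t x‖ := by
    have := ghL_norm_apply (-t) (ghL t x)
    rwa [ghL_inv] at this
  have h2 := (iteratedFDeriv ℝ n g (ghL t x)).norm_compContinuousLinearMap_le (fun _ => ghL t)
  rw [Finset.prod_const, Finset.card_univ, Fintype.card_fin] at h2
  have h3 : ‖ghL t‖ ^ n ≤ 2 ^ n := pow_le_pow_left₀ (norm_nonneg _) (ghL_norm t) n
  have h4 := SchwartzMap.le_seminorm ℂ k n g (ghL t x)
  calc _ ≤ (2 * ‖ghL t x‖) ^ k * (‖iteratedFDeriv ℝ n g (ghL t x)‖ * 2 ^ n) := by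
        refine mul_le_mul (pow_le_pow_left₀ (norm_nonneg _) h1 k) (h2.trans ?_)
          (norm_nonneg _) (by positivity)
        exact mul_le_mul_of_nonneg_left h3 (norm_nonneg _)
    _ = 2 ^ k * 2 ^ n * (‖ghL t x‖ ^ k * ‖iteratedFDeriv ℝ n g (ghL t x)‖) := by
        rw [mul_pow]; ring
    _ ≤ _ := by gcongr

lemma rot_bounded {S : Set (SchwartzMap (ℝ × ℝ) ℂ)} (hS : Bornology.IsVonNBounded ℂ S) :
    Bornology.IsVonNBounded ℂ {g | ∃ t, ∃ h ∈ S, g = rot t h} := by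
  rw [(schwartz_withSeminorms ℂ (ℝ × ℝ) ℂ).isVonNBounded_iff_seminorm_bounded] at hS ⊢
  rintro ⟨k, n⟩
  obtain ⟨r, hr, h⟩ := hS (k, n)
  refine ⟨2 ^ k * 2 ^ n * r, by positivity, ?_⟩
  rintro _ ⟨t, g, hg, rfl⟩
  refine (rot_seminorm t g k n).trans_lt ?_
  exact mul_lt_mul_of_pos_left (h g hg) (by positivity)

lemma iter_bounded (V : ℝ → ℝ) (f : SchwartzMap (ℝ × ℝ) ℂ) (νs : List ℕ) :
    ∃ S : Set (SchwartzMap (ℝ × ℝ) ℂ), Bornology.IsVonNBounded ℂ S ∧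
      ∀ ss : List ℝ, ss.length = νs.length → ∃ g ∈ S, ⇑g = iterB V (νs.zip ss) f := by
  induction νs with
  | nil => exact ⟨{f}, Bornology.isVonNBounded_singleton f, fun ss _ => ⟨f, rfl, by simp [iterB]⟩⟩
  | cons ν νs ih =>
    obtain ⟨S, hS, h⟩ := ih
    refine ⟨_, (rot_bounded hS).image (BopCLM V ν), ?_⟩
    rintro (_ | ⟨s, ss⟩) hss
    · simp at hss
    obtain ⟨g, hg, hg'⟩ := h ss (by simpa using hss)
    refine ⟨_, ⟨rot (-s) g, ⟨-s, g, hg, rfl⟩, rfl⟩, ?_⟩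
    rw [BopCLM_apply, List.zip_cons_cons, iterB, rot_coe, ← hg']
    congr 1
    funext p
    simp [ghL_apply]

/-- Uniform-in-time `L²` bound for iterated correction operators applied to a Schwartz function
along the harmonic flow. -/
theorem iterated_Bop_L2_bound (V : ℝ → ℝ) (hV : ContDiff ℝ (⊤ : ℕ∞) V) (hV0 : V 0 = 0)
    (hV1 : deriv V 0 = 0) (hV2 : iteratedDeriv 2 V 0 = 1)
    (νs : List ℕ) (hne : νs ≠ []) (hν : ∀ ν ∈ νs, 1 ≤ ν)
    (f : SchwartzMap (ℝ × ℝ) ℂ) :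
    ∃ C : ℝ, ∀ ss : List ℝ, ss.length = νs.length →
      Real.sqrt (∫ p : ℝ × ℝ, ‖iterB V (νs.zip ss) (⇑f) p‖ ^ 2) ≤ C := by
  obtain ⟨S, hS, h⟩ := iter_bounded V f νs
  have hb := hS.image (SchwartzMap.toLpCLM ℂ ℂ 2 (volume : Measure (ℝ × ℝ)))
  rw [NormedSpace.isVonNBounded_iff, isBounded_iff_forall_norm_le] at hb
  obtain ⟨C, hC⟩ := hb
  refine ⟨C, fun ss hss => ?_⟩
  obtain ⟨g, hg, hg'⟩ := h ss hss
  have := hC _ ⟨g, hg, rfl⟩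
  rw [SchwartzMap.toLpCLM_apply, SchwartzMap.norm_toLp' (by simp) (by simp)] at this
  rw [← hg', Real.sqrt_eq_rpow]
  simpa using this
end

section
/- Let ε > 0, let W_0^ε(x,k) = (1/(√π ε)) e^{−x²} e^{−(k−x)²/ε²} (the Wigner transform of the Gauss–Fresnel state e^{−x²/2} e^{ix²/(2ε)}), and let W_h^ε(x,k,t) := W_0^ε(g_h^{−t}(x,k)) be its propagation along the harmonic flow, which solves ∂_t W + k∂_x W − x∂_k W = 0. Then at each focal point (x_ν, t_ν) = (0, νπ − π/4), ν = 1, 2, …, of the harmonic-oscillator ray field with initial phase S_0(x) = x²/2, the momentum integral of W_h^ε satisfies exactly ∫_ℝ W_h^ε(0, k, t_ν) dk = √2 / ε. -/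
open MeasureTheory

/-- The Wigner transform of the Gauss–Fresnel state `e^{-x²/2} e^{ix²/(2ε)}`:
`W_0^ε(x,k) = (1/(√π ε)) e^{-x²} e^{-(k-x)²/ε²}`. -/
noncomputable def W0GF (ε : ℝ) : ℝ × ℝ → ℝ := fun p =>
  (1 / (Real.sqrt Real.pi * ε)) * Real.exp (-p.1 ^ 2) * Real.exp (-(p.2 - p.1) ^ 2 / ε ^ 2)

theorem W0GF_hasDerivAt (ε : ℝ) {a b : ℝ → ℝ} {a1 b1 x : ℝ} (ha : HasDerivAt a a1 x)
    (hb : HasDerivAt b b1 x) :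
    HasDerivAt (fun s => W0GF ε (a s, b s))
      (W0GF ε (a x, b x) * (-(2 * a x * a1) - 2 * (b x - a x) * (b1 - a1) / ε ^ 2)) x := by
  have h1 := ((ha.pow 2).neg.exp).const_mul (1 / (Real.sqrt Real.pi * ε))
  have h2 := ((((hb.sub ha).pow 2).neg).div_const (ε ^ 2)).exp
  have h3 := h1.mul h2
  refine HasDerivAt.congr_deriv h3 ?_
  simp [W0GF]
  ring

/-- The harmonic propagation `W_h^ε(x,k,t) = W_0^ε(g_h^{-t}(x,k))` of the Gauss–Fresnel Wigner
function solves the harmonic transport equation, and at each focal point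
`(x_ν, t_ν) = (0, νπ - π/4)`, `ν ≥ 1`, its momentum integral equals `√2/ε` exactly. -/
theorem focal_point_amplitude (ε : ℝ) (hε : 0 < ε) :
    (∀ (t : ℝ) (p : ℝ × ℝ),
      deriv (fun s => W0GF ε (gh (-s) p)) t
        + p.2 * deriv (fun x => W0GF ε (gh (-t) (x, p.2))) p.1
        - p.1 * deriv (fun k => W0GF ε (gh (-t) (p.1, k))) p.2 = 0) ∧
    ∀ ν : ℕ, 1 ≤ ν →
      (∫ k : ℝ, W0GF ε (gh (-((ν : ℝ) * Real.pi - Real.pi / 4)) (0, k))) =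
        Real.sqrt 2 / ε := by
  constructor
  · rintro t ⟨x, k⟩
    have hc : HasDerivAt (fun s : ℝ => Real.cos (-s)) (Real.sin (-t)) t := by
      simpa using (hasDerivAt_neg t).cos
    have hs : HasDerivAt (fun s : ℝ => Real.sin (-s)) (-Real.cos (-t)) t := by
      simpa using (hasDerivAt_neg t).sin
    have e1 := (W0GF_hasDerivAt ε ((hc.const_mul x).add (hs.const_mul k))
      ((hc.const_mul k).sub (hs.const_mul x))).deriv
    have e2 := (W0GF_hasDerivAt ε
      (((hasDerivAt_id x).mul_const (Real.cos (-t))).add_const (k * Real.sin (-t)))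
      (((hasDerivAt_id x).mul_const (Real.sin (-t))).const_sub (k * Real.cos (-t)))).deriv
    have e3 := (W0GF_hasDerivAt ε
      (((hasDerivAt_id k).mul_const (Real.sin (-t))).const_add (x * Real.cos (-t)))
      (((hasDerivAt_id k).mul_const (Real.cos (-t))).sub_const (x * Real.sin (-t)))).deriv
    simp only [id, Pi.add_apply, Pi.sub_apply] at e1 e2 e3
    simp only [gh]
    rw [e1, e2, e3]
    ring
  · intro ν _
    have hsc : Real.sin ((ν : ℝ) * Real.pi - Real.pi / 4)
        = -Real.cos ((ν : ℝ) * Real.pi - Real.pi / 4) := by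
      rw [Real.sin_sub, Real.cos_sub, Real.sin_nat_mul_pi, Real.cos_pi_div_four,
        Real.sin_pi_div_four]
      ring
    have h1 := Real.sin_sq_add_cos_sq ((ν : ℝ) * Real.pi - Real.pi / 4)
    generalize (ν : ℝ) * Real.pi - Real.pi / 4 = t at hsc h1 ⊢
    have hc2 : Real.cos t ^ 2 = 1 / 2 := by rw [hsc] at h1; linarith
    have hf : (fun k : ℝ => W0GF ε (gh (-t) (0, k)))
        = fun k => (1 / (Real.sqrt Real.pi * ε)) * Real.exp (-(1 / 2) * k ^ 2) := by
      funext k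
      simp only [W0GF, gh, Real.cos_neg, Real.sin_neg, hsc]
      have : -(0 * Real.cos t + k * - -Real.cos t) ^ 2 = -(1 / 2) * k ^ 2 := by
        linear_combination (-k ^ 2) * hc2
      rw [this]
      simp
    rw [hf, integral_const_mul, integral_gaussian]
    have hp : 0 < Real.sqrt Real.pi := Real.sqrt_pos.mpr Real.pi_pos
    rw [show Real.pi / (1 / 2) = 2 * Real.pi by ring, Real.sqrt_mul (by norm_num)]
    field_simp
end
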